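/- Let J ⊂ ℂ[p_J] be the ideal generated by the ten binomials p_4p_{123}−p_3p_{124}, p_{24}p_{134}−p_{14}p_{234}, p_{23}p_{134}−p_{13}p_{234}, p_2p_{14}−p_1p_{24}, p_2p_{13}−p_1p_{23}, p_{24}p_{123}−p_{23}p_{124}, p_{14}p_{123}−p_{13}p_{124}, p_4p_{23}−p_3p_{24}, p_4p_{13}−p_3p_{14}, p_{14}p_{23}−p_{13}p_{24}. Then: (1) there exists w ∈ ℝ^14 such that init_w(I_4) = J; (2) J is not a prime ideal; and (3) the ideal J + ⟨p_2p_{134}−p_1p_{234}⟩ is a prime ideal. -/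

import Mathlib

open MvPolynomial

/-- The weight of a monomial exponent `u` with respect to a weight vector `w`. -/
noncomputable def wt {N : ℕ} (w : Fin N → ℝ) (u : Fin N →₀ ℕ) : ℝ :=
  ∑ i, w i * (u i : ℝ)

open Classical in
/-- The initial form of a polynomial `f` with respect to a weight vector `w`:
the sum of the terms whose weight is minimal among the terms of `f`. -/
noncomputable def initialForm {N : ℕ} (w : Fin N → ℝ) (f : MvPolynomial (Fin N) ℂ) :
    MvPolynomial (Fin N) ℂ :=
  ∑ u ∈ f.support, if ∀ v ∈ f.support, wt w u ≤ wt w v then monomial u (coeff u f) else 0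

/-- The initial ideal of `I` with respect to a weight vector `w`. -/
noncomputable def initialIdeal {N : ℕ} (w : Fin N → ℝ) (I : Ideal (MvPolynomial (Fin N) ℂ)) :
    Ideal (MvPolynomial (Fin N) ℂ) :=
  Ideal.span {g | ∃ f ∈ I, f ≠ 0 ∧ g = initialForm w f}

/-- An ideal is binomial if it is generated by polynomials with at most two terms. -/
def IsBinomialIdeal {N : ℕ} (I : Ideal (MvPolynomial (Fin N) ℂ)) : Prop :=
  ∃ S : Set (MvPolynomial (Fin N) ℂ), I = Ideal.span S ∧ ∀ f ∈ S, f.support.card ≤ 2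

/-- The Plücker minor: the determinant of the submatrix of the `r × c` matrix of
indeterminates `(x_{i,j})` with row indices `1, …, |J|` and column indices the elements
of `J` in increasing order. -/
noncomputable def pluckerMinor (r c : ℕ) (J : Finset (Fin c)) (h : J.card ≤ r) :
    MvPolynomial (Fin r × Fin c) ℂ :=
  (Matrix.of fun a b : Fin J.card =>
    MvPolynomial.X (Fin.castLE h a, ((J.orderIsoOfFin rfl b : Fin c)))).det

/-- The 14 nonempty proper subsets of `{1,2,3,4}` in the order
`p₁,p₂,p₃,p₄,p₁₂,p₁₃,p₁₄,p₂₃,p₂₄,p₃₄,p₁₂₃,p₁₂₄,p₁₃₄,p₂₃₄`. -/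
def subsets4 : Fin 14 → Finset (Fin 4) :=
  ![{0}, {1}, {2}, {3}, {0, 1}, {0, 2}, {0, 3}, {1, 2}, {1, 3}, {2, 3},
    {0, 1, 2}, {0, 1, 3}, {0, 2, 3}, {1, 2, 3}]

lemma subsets4_card : ∀ i : Fin 14, (subsets4 i).card ≤ 3 := by decide

/-- The map `φ₄` sending each Plücker variable `p_J` to the corresponding minor of the
`3 × 4` matrix of indeterminates. -/
noncomputable def phi4 : MvPolynomial (Fin 14) ℂ →ₐ[ℂ] MvPolynomial (Fin 3 × Fin 4) ℂ :=
  MvPolynomial.aeval fun i => pluckerMinor 3 4 (subsets4 i) (subsets4_card i)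

/-- The defining ideal `I₄` of the flag variety `Flag₄` in its Plücker embedding. -/
noncomputable def I4 : Ideal (MvPolynomial (Fin 14) ℂ) := RingHom.ker phi4.toRingHom

/-- Variable indices: `0 ↦ p₁, 1 ↦ p₂, 2 ↦ p₃, 3 ↦ p₄, 4 ↦ p₁₂, 5 ↦ p₁₃, 6 ↦ p₁₄,
7 ↦ p₂₃, 8 ↦ p₂₄, 9 ↦ p₃₄, 10 ↦ p₁₂₃, 11 ↦ p₁₂₄, 12 ↦ p₁₃₄, 13 ↦ p₂₃₄`.
The non-prime initial ideal of a maximal cone of `trop(Flag₄)`. -/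
noncomputable def nonPrimeInitial : Ideal (MvPolynomial (Fin 14) ℂ) :=
  Ideal.span {X 3 * X 10 - X 2 * X 11, X 8 * X 12 - X 6 * X 13, X 7 * X 12 - X 5 * X 13,
    X 1 * X 6 - X 0 * X 8, X 1 * X 5 - X 0 * X 7, X 8 * X 10 - X 7 * X 11,
    X 6 * X 10 - X 5 * X 11, X 3 * X 7 - X 2 * X 8, X 3 * X 5 - X 2 * X 6,
    X 6 * X 7 - X 5 * X 8}


lemma filterMap_some_aux {α β : Type*} (f : α → β) (s : Multiset α) :
    s.filterMap (fun x => some (f x)) = s.map f := by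
  induction s using Multiset.induction_on with
  | empty => simp
  | cons a s ih => rw [Multiset.filterMap_cons_some (fun x => some (f x)) a s rfl, ih, Multiset.map_cons]

lemma filterMap_none_aux {α β : Type*} (s : Multiset α) :
    s.filterMap (fun _ => (none : Option β)) = 0 := by
  induction s using Multiset.induction_on with
  | empty => simp
  | cons a s ih => rw [Multiset.filterMap_cons_none _ _ rfl, ih]



/-- exponent classes -/
noncomputable def expo (row col : Fin 14 → Fin 8) (u : Fin 14 →₀ ℕ) : (Fin 8 ⊕ Fin 8) →₀ ℕ :=
  Multiset.toFinsupp ((Finsupp.toMultiset u).map (fun i => Sum.inl (row i)) +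
    (Finsupp.toMultiset u).map (fun i => Sum.inr (col i)))

lemma expo_inj {row col : Fin 14 → Fin 8} {u v : Fin 14 →₀ ℕ} (h : expo row col u = expo row col v) :
    (Finsupp.toMultiset u).map row = (Finsupp.toMultiset v).map row ∧
    (Finsupp.toMultiset u).map col = (Finsupp.toMultiset v).map col := by
  have h' := Multiset.toFinsupp.injective h
  constructor
  · have := congrArg (Multiset.filterMap (fun x : Fin 8 ⊕ Fin 8 => Sum.elim some (fun _ => none) x)) h'
    simpa [Multiset.filterMap_add, Multiset.filterMap_map, Function.comp_def, filterMap_some_aux, filterMap_none_aux] using this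
  · have := congrArg (Multiset.filterMap (fun x : Fin 8 ⊕ Fin 8 => Sum.elim (fun _ => none) some x)) h'
    simpa [Multiset.filterMap_add, Multiset.filterMap_map, Function.comp_def, filterMap_some_aux, filterMap_none_aux] using this

lemma toric_aux (row col : Fin 14 → Fin 8) (rk : Fin 8 → ℕ) (G : Fin 14 → Prop)
    (I : Ideal (MvPolynomial (Fin 14) ℂ))
    (inj : ∀ i j, G i → G j → row i = row j → col i = col j → i = j)
    (swap : ∀ i j k, G i → G j → G k → row i = row k → col j = col k → rk (row i) ≤ rk (row j) →
      ∃ l, G l ∧ row l = row j ∧ col l = col i ∧ (X i * X j - X k * X l : MvPolynomial (Fin 14) ℂ) ∈ I) :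
    ∀ (n : ℕ) (s t : Multiset (Fin 14)), t.card = n → (∀ i ∈ s, G i) → (∀ i ∈ t, G i) →
      s.map row = t.map row → s.map col = t.map col →
      ((s.map X).prod - (t.map X).prod : MvPolynomial (Fin 14) ℂ) ∈ I := by
  intro n
  induction n with
  | zero =>
    intro s t ht _ _ hr _
    have ht0 : t = 0 := Multiset.card_eq_zero.mp ht
    subst ht0
    have : s = 0 := by simpa using hr
    subst this
    simp
  | succ n ih =>
    intro s t ht hs hgt hr hc
    have hne : t.toFinset.Nonempty := by
      rw [Multiset.toFinset_nonempty]
      rintro rfl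
      simp at ht
    obtain ⟨k, hk, hmin⟩ := Finset.exists_min_image t.toFinset (fun i => rk (row i)) hne
    rw [Multiset.mem_toFinset] at hk
    obtain ⟨i, his, hi⟩ : ∃ i ∈ s, row i = row k := by
      have : row k ∈ s.map row := by rw [hr]; exact Multiset.mem_map_of_mem _ hk
      simpa using this
    obtain ⟨j, hjs, hj⟩ : ∃ i ∈ s, col i = col k := by
      have : col k ∈ s.map col := by rw [hc]; exact Multiset.mem_map_of_mem _ hk
      simpa using this
    obtain ⟨t', rfl⟩ := Multiset.exists_cons_of_mem hk
    have hle : rk (row i) ≤ rk (row j) := by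
      have : row j ∈ (k ::ₘ t').map row := by rw [← hr]; exact Multiset.mem_map_of_mem _ hjs
      obtain ⟨m, hm, hm'⟩ := Multiset.mem_map.mp this
      rw [hi, ← hm']
      exact hmin m (by rw [Multiset.mem_toFinset]; exact hm)
    obtain ⟨s', rfl⟩ := Multiset.exists_cons_of_mem his
    have htc : t'.card = n := by simpa using ht
    by_cases hij : j = i
    · subst hij
      have hjk : j = k := inj _ _ (hs _ his) (hgt _ hk) hi hj
      subst hjk
      have := ih s' t' htc (fun x hx => hs x (Multiset.mem_cons_of_mem hx))
        (fun x hx => hgt x (Multiset.mem_cons_of_mem hx)) (by simpa using hr) (by simpa using hc)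
      have h2 := I.mul_mem_left (X j) this
      simpa [mul_sub] using h2
    · have hjs' : j ∈ s' := by
        rcases Multiset.mem_cons.mp hjs with h | h
        · exact absurd h hij
        · exact h
      obtain ⟨s'', rfl⟩ := Multiset.exists_cons_of_mem hjs'
      obtain ⟨l, hGl, hlr, hlc, hl⟩ := swap i j k (hs _ his) (hs _ hjs) (hgt _ hk) hi hj hle
      have := ih (l ::ₘ s'') t' htc
        (fun x hx => by
          rcases Multiset.mem_cons.mp hx with h | h
          · rw [h]; exact hGl
          · exact hs x (Multiset.mem_cons_of_mem (Multiset.mem_cons_of_mem h)))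
        (fun x hx => hgt x (Multiset.mem_cons_of_mem hx))
        (by simpa [hlr, hi] using hr)
        (by
          rw [Multiset.map_cons, Multiset.map_cons, Multiset.map_cons, hj, Multiset.cons_swap] at hc
          simpa [hlc] using hc)
      have h2 := I.add_mem (I.mul_mem_left (X k) this) (I.mul_mem_right ((s''.map X).prod) hl)
      convert h2 using 1
      simp only [Multiset.map_cons, Multiset.prod_cons]
      ring

lemma monomial_eq_mprod (u : Fin 14 →₀ ℕ) :
    (monomial u 1 : MvPolynomial (Fin 14) ℂ) = ((Finsupp.toMultiset u).map X).prod := by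
  rw [MvPolynomial.monomial_eq, Finsupp.toMultiset_map, Finsupp.prod_toMultiset, Finsupp.prod_mapDomain_index (by simp) (by intros; simp [pow_add])]; simp



lemma mprod_monomial_one (m : Multiset (Fin 8 ⊕ Fin 8)) :
    (m.map X).prod = (monomial (Multiset.toFinsupp m) 1 : MvPolynomial (Fin 8 ⊕ Fin 8) ℂ) := by
  induction m using Multiset.induction_on with
  | empty => simp
  | cons a m ih =>
    rw [Multiset.map_cons, Multiset.prod_cons, ih, ← Multiset.singleton_add, map_add,
      Multiset.toFinsupp_singleton, X, monomial_mul, one_mul]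

open Classical in
/-- toric map -/
noncomputable def theta (row col : Fin 14 → Fin 8) (G : Fin 14 → Prop) :
    MvPolynomial (Fin 14) ℂ →ₐ[ℂ] MvPolynomial (Fin 8 ⊕ Fin 8) ℂ :=
  aeval fun i => if G i then X (Sum.inl (row i)) * X (Sum.inr (col i)) else 0

lemma theta_good (row col : Fin 14 → Fin 8) (G : Fin 14 → Prop) (u : Fin 14 →₀ ℕ)
    (h : ∀ i ∈ Finsupp.toMultiset u, G i) :
    theta row col G (monomial u 1) = monomial (expo row col u) 1 := by
  rw [monomial_eq_mprod, map_multiset_prod, Multiset.map_map, expo, ← mprod_monomial_one]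
  rw [Multiset.map_add, Multiset.prod_add, Multiset.map_map, Multiset.map_map,
    ← Multiset.prod_map_mul]
  congr 1
  apply Multiset.map_congr rfl
  intro i hi
  simp [theta, h i hi]

lemma ker_theta_le (row col : Fin 14 → Fin 8) (rk : Fin 8 → ℕ) (G : Fin 14 → Prop)
    (I : Ideal (MvPolynomial (Fin 14) ℂ))
    (bad : ∀ i, ¬ G i → X i ∈ I)
    (inj : ∀ i j, G i → G j → row i = row j → col i = col j → i = j)
    (swap : ∀ i j k, G i → G j → G k → row i = row k → col j = col k → rk (row i) ≤ rk (row j) →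
      ∃ l, G l ∧ row l = row j ∧ col l = col i ∧ (X i * X j - X k * X l : MvPolynomial (Fin 14) ℂ) ∈ I)
    (f : MvPolynomial (Fin 14) ℂ) (hf : theta row col G f = 0) : f ∈ I := by
  classical
  let good : (Fin 14 →₀ ℕ) → Prop := fun u => ∀ i ∈ Finsupp.toMultiset u, G i
  let sec : ((Fin 8 ⊕ Fin 8) →₀ ℕ) → (Fin 14 →₀ ℕ) := fun e =>
    if h : ∃ u, good u ∧ expo row col u = e then h.choose else 0
  have hsec : ∀ u, good u → good (sec (expo row col u)) ∧
      expo row col (sec (expo row col u)) = expo row col u := by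
    intro u hu
    have h : ∃ v, good v ∧ expo row col v = expo row col u := ⟨u, hu, rfl⟩
    simp only [sec, dif_pos h]
    exact h.choose_spec
  let L : MvPolynomial (Fin 8 ⊕ Fin 8) ℂ →ₗ[ℂ] MvPolynomial (Fin 14) ℂ :=
    (basisMonomials (Fin 8 ⊕ Fin 8) ℂ).constr ℂ (fun e => monomial (sec e) 1)
  have hL : ∀ e, L (monomial e 1) = monomial (sec e) 1 := by
    intro e
    have := (basisMonomials (Fin 8 ⊕ Fin 8) ℂ).constr_basis ℂ (fun e => (monomial (sec e) 1 : MvPolynomial (Fin 14) ℂ)) e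
    simpa [L] using this
  have key1 : ∀ u, monomial u 1 - L (theta row col G (monomial u 1)) ∈ I := by
    intro u
    by_cases hu : good u
    · rw [theta_good _ _ _ _ hu, hL]
      obtain ⟨h1, h2⟩ := hsec u hu
      obtain ⟨h3, h4⟩ := expo_inj h2
      rw [monomial_eq_mprod, monomial_eq_mprod]
      exact toric_aux row col rk G I inj swap _ _ _ rfl hu h1 h3.symm h4.symm
    · simp only [good, not_forall] at hu
      obtain ⟨i, hi, hGi⟩ := hu
      obtain ⟨v, hv⟩ := Multiset.exists_cons_of_mem hi
      have : (monomial u 1 : MvPolynomial (Fin 14) ℂ) = X i * (v.map X).prod := by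
        rw [monomial_eq_mprod, hv]; simp
      rw [this, map_mul]
      have h0 : theta row col G (X i) = 0 := by simp [theta, hGi]
      rw [h0, zero_mul, map_zero, sub_zero]
      exact I.mul_mem_right _ (bad i hGi)
  have key : ∀ g, g - L (theta row col G g) ∈ I := by
    intro g
    induction g using MvPolynomial.induction_on' with
    | monomial u a =>
      have h1 : (monomial u a : MvPolynomial (Fin 14) ℂ) = a • monomial u 1 := by
        rw [smul_monomial, smul_eq_mul, mul_one]
      rw [h1, map_smul, map_smul, ← smul_sub, MvPolynomial.smul_eq_C_mul]
      exact I.mul_mem_left _ (key1 u)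
    | add p q hp hq =>
      rw [map_add, map_add]
      convert I.add_mem hp hq using 1
      ring
  have := key f
  rwa [hf, map_zero, sub_zero] at this

lemma theta_zero_of_points (row col : Fin 14 → Fin 8) (G : Fin 14 → Prop) [DecidablePred G]
    (q g : MvPolynomial (Fin 14) ℂ) (hq : theta row col G q ≠ 0)
    (h : ∀ r c : Fin 8 → ℂ, (∀ i, r i ≠ 0) → (∀ i, c i ≠ 0) →
      eval (fun i => if G i then r (row i) * c (col i) else 0) q ≠ 0 →
      eval (fun i => if G i then r (row i) * c (col i) else 0) g = 0) :
    theta row col G g = 0 := by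
  have hev : ∀ (x : Fin 8 ⊕ Fin 8 → ℂ) (p : MvPolynomial (Fin 14) ℂ), eval x (theta row col G p) =
      eval (fun i => if G i then x (Sum.inl (row i)) * x (Sum.inr (col i)) else 0) p := by
    intro x p
    have : (eval x).comp (theta row col G).toRingHom =
      eval (fun i => if G i then x (Sum.inl (row i)) * x (Sum.inr (col i)) else 0) := by
      apply MvPolynomial.ringHom_ext
      · intro a; simp
      · intro i
        by_cases hi : G i <;> simp [theta, hi]
    exact congrArg (fun φ => φ p) this
  have : theta row col G g * (theta row col G q * ∏ i, X i) = 0 := by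
    apply MvPolynomial.funext
    intro x
    rw [map_mul, map_mul, map_zero, map_prod]
    by_contra hne
    have h1 := left_ne_zero_of_mul (right_ne_zero_of_mul hne)
    have h2 := right_ne_zero_of_mul (right_ne_zero_of_mul hne)
    have h3 := left_ne_zero_of_mul hne
    simp only [eval_X] at h2
    rw [Finset.prod_ne_zero_iff] at h2
    rw [hev] at h1 h3
    exact h3 (h (fun i => x (Sum.inl i)) (fun i => x (Sum.inr i)) (fun i => h2 _ (Finset.mem_univ _))
      (fun i => h2 _ (Finset.mem_univ _)) h1)
  rcases mul_eq_zero.mp this with h | h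
  · exact h
  · rcases mul_eq_zero.mp h with h | h
    · exact absurd h hq
    · exact absurd h (Finset.prod_ne_zero_iff.mpr fun i _ => X_ne_zero i)

/-- integer weight -/
lemma init_eval (n : Fin 14 → ℕ) (lam : Fin 14 → ℂ) (r : Fin 14 → Polynomial ℂ)
    (f : MvPolynomial (Fin 14) ℂ)
    (hf : aeval (fun i => Polynomial.X ^ n i * (Polynomial.C (lam i) + Polynomial.X * r i)) f = 0) :
    eval lam (initialForm (fun i => (n i : ℝ)) f) = 0 := by
  classical
  by_cases hf0 : f.support = ∅
  · simp [initialForm, hf0]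
  let N : (Fin 14 →₀ ℕ) → ℕ := fun u => ∑ i, n i * u i
  have hN : ∀ u, wt (fun i => (n i : ℝ)) u = (N u : ℝ) := by
    intro u; simp [wt, N]
  obtain ⟨u0, hu0, hmin⟩ := Finset.exists_min_image f.support N (Finset.nonempty_iff_ne_empty.mpr hf0)
  have hc := congrArg (fun p => Polynomial.coeff p (N u0)) hf
  simp only [Polynomial.coeff_zero] at hc
  rw [← hc, initialForm, map_sum, aeval_def, eval₂_eq', Polynomial.finsetSum_coeff]
  apply Finset.sum_congr rfl
  intro u hu
  have hform : (∏ i, (Polynomial.X ^ n i * (Polynomial.C (lam i) + Polynomial.X * r i)) ^ u i : Polynomial ℂ)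
      = Polynomial.X ^ (N u) * ∏ i, (Polynomial.C (lam i) + Polynomial.X * r i) ^ u i := by
    simp only [mul_pow, Finset.prod_mul_distrib, ← pow_mul, Finset.prod_pow_eq_pow_sum, N]
  rw [hform, Polynomial.algebraMap_eq, Polynomial.coeff_C_mul, Polynomial.coeff_X_pow_mul']
  by_cases hle : N u ≤ N u0
  · have heq : N u = N u0 := le_antisymm hle (hmin u hu)
    have hall : ∀ v ∈ f.support, wt (fun i => (n i : ℝ)) u ≤ wt (fun i => (n i : ℝ)) v := by
      intro v hv
      rw [hN, hN, heq]
      exact_mod_cast hmin v hv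
    rw [if_pos hall, if_pos hle, heq, Nat.sub_self, Polynomial.coeff_zero_eq_eval_zero,
      Polynomial.eval_prod, eval_monomial, Finsupp.prod_fintype _ _ (by simp)]
    simp
  · have hall : ¬ ∀ v ∈ f.support, wt (fun i => (n i : ℝ)) u ≤ wt (fun i => (n i : ℝ)) v := by
      intro h
      have := h u0 hu0
      rw [hN, hN] at this
      exact hle (by exact_mod_cast this)
    rw [if_neg hall, if_neg hle]
    simp

lemma init_of_split {N : ℕ} (w : Fin N → ℝ) (d : ℝ) (g h : MvPolynomial (Fin N) ℂ) (hg0 : g ≠ 0)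
    (hg : ∀ u, coeff u g ≠ 0 → wt w u = d) (hh : ∀ u, coeff u h ≠ 0 → d < wt w u) :
    initialForm w (g + h) = g := by
  classical
  have hz : ∀ u, coeff u g ≠ 0 → coeff u h = 0 := by
    intro u hu
    by_contra hne
    have := hh u hne
    rw [hg u hu] at this
    exact lt_irrefl _ this
  obtain ⟨u0, hu0⟩ := MvPolynomial.ne_zero_iff.mp hg0
  have hsupp : ∀ u, coeff u (g + h) ≠ 0 → d ≤ wt w u := by
    intro u hu
    by_cases h1 : coeff u g = 0
    · exact (hh u (by simpa [h1] using hu)).le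
    · exact (hg u h1).ge
  have hc : ∀ u ∈ (g + h).support, (if ∀ v ∈ (g + h).support, wt w u ≤ wt w v then
      monomial u (coeff u (g + h)) else 0) = monomial u (coeff u g) := by
    intro u hu
    by_cases h1 : coeff u g = 0
    · rw [if_neg, h1, monomial_zero]
      intro hall
      have h2 := hall u0 (by rw [mem_support_iff, coeff_add, hz u0 hu0, add_zero]; exact hu0)
      rw [hg u0 hu0] at h2
      have h3 := hh u (by rw [mem_support_iff, coeff_add, h1, zero_add] at hu; exact hu)
      linarith
    · rw [if_pos, coeff_add, hz u h1, add_zero]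
      intro v hv
      rw [hg u h1]
      exact hsupp v (mem_support_iff.mp hv)
  unfold initialForm
  rw [Finset.sum_congr rfl hc]
  conv_rhs => rw [← support_sum_monomial_coeff g]
  symm
  apply Finset.sum_subset
  · intro u hu
    rw [mem_support_iff] at hu ⊢
    rw [coeff_add, hz u hu, add_zero]; exact hu
  · intro u _ hu
    rw [notMem_support_iff] at hu
    rw [hu, monomial_zero]


lemma minor_eq {k : ℕ} (hk : k ≤ 3) (J : Finset (Fin 4)) (h : J.card ≤ 3) (hJ : J.card = k)
    (f : Fin k → Fin 4) (hf : StrictMono f) (hm : ∀ x, f x ∈ J) :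
    pluckerMinor 3 4 J h = (Matrix.of fun a b : Fin k =>
      (X (Fin.castLE hk a, f b) : MvPolynomial (Fin 3 × Fin 4) ℂ)).det := by
  subst hJ
  have := Finset.orderEmbOfFin_unique rfl hm hf
  subst this
  rfl

/-- explicit minors -/
def minors {A : Type*} [CommRing A] (x : Fin 3 → Fin 4 → A) : Fin 14 → A :=
  ![x 0 0, x 0 1, x 0 2, x 0 3,
    x 0 0 * x 1 1 - x 0 1 * x 1 0, x 0 0 * x 1 2 - x 0 2 * x 1 0, x 0 0 * x 1 3 - x 0 3 * x 1 0,
    x 0 1 * x 1 2 - x 0 2 * x 1 1, x 0 1 * x 1 3 - x 0 3 * x 1 1, x 0 2 * x 1 3 - x 0 3 * x 1 2,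
    (x 0 0 * x 1 1 - x 0 1 * x 1 0) * x 2 2 - (x 0 0 * x 1 2 - x 0 2 * x 1 0) * x 2 1
      + (x 0 1 * x 1 2 - x 0 2 * x 1 1) * x 2 0,
    (x 0 0 * x 1 1 - x 0 1 * x 1 0) * x 2 3 - (x 0 0 * x 1 3 - x 0 3 * x 1 0) * x 2 1
      + (x 0 1 * x 1 3 - x 0 3 * x 1 1) * x 2 0,
    (x 0 0 * x 1 2 - x 0 2 * x 1 0) * x 2 3 - (x 0 0 * x 1 3 - x 0 3 * x 1 0) * x 2 2
      + (x 0 2 * x 1 3 - x 0 3 * x 1 2) * x 2 0,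
    (x 0 1 * x 1 2 - x 0 2 * x 1 1) * x 2 3 - (x 0 1 * x 1 3 - x 0 3 * x 1 1) * x 2 2
      + (x 0 2 * x 1 3 - x 0 3 * x 1 2) * x 2 1]

lemma minor1 (i : Fin 14) (a : Fin 4) (h : subsets4 i = {a}) :
    pluckerMinor 3 4 (subsets4 i) (subsets4_card i) = X (0, a) := by
  rw [minor_eq (k := 1) (by norm_num) _ _ (by rw [h]; simp) ![a]
    (by intro x y hxy; omega) (by intro x; simp [h])]
  simp

lemma minor2 (i : Fin 14) (a b : Fin 4) (hab : a < b) (h : subsets4 i = {a, b}) :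
    pluckerMinor 3 4 (subsets4 i) (subsets4_card i) = X (0, a) * X (1, b) - X (0, b) * X (1, a) := by
  rw [minor_eq (k := 2) (by norm_num) _ _ (by rw [h, Finset.card_pair hab.ne]) ![a, b]
    (by intro x y hxy; fin_cases x <;> fin_cases y <;> simp_all)
    (by intro x; rw [h]; fin_cases x <;> simp)]
  rw [Matrix.det_fin_two]
  rfl

lemma minor3 (i : Fin 14) (a b c : Fin 4) (hab : a < b) (hbc : b < c) (h : subsets4 i = {a, b, c}) :
    pluckerMinor 3 4 (subsets4 i) (subsets4_card i) =
    (X (0, a) * X (1, b) - X (0, b) * X (1, a)) * X (2, c)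
    - (X (0, a) * X (1, c) - X (0, c) * X (1, a)) * X (2, b)
    + (X (0, b) * X (1, c) - X (0, c) * X (1, b)) * X (2, a) := by
  have hac := hab.trans hbc
  rw [minor_eq (k := 3) (by norm_num) _ _
    (by rw [h, Finset.card_eq_three]; exact ⟨a, b, c, hab.ne, hac.ne, hbc.ne, rfl⟩) ![a, b, c]
    (by intro x y hxy; fin_cases x <;> fin_cases y <;> simp_all)
    (by intro x; rw [h]; fin_cases x <;> simp)]
  rw [Matrix.det_fin_three]
  change X (0, a) * X (1, b) * X (2, c) - X (0, a) * X (1, c) * X (2, b)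
    - X (0, b) * X (1, a) * X (2, c) + X (0, b) * X (1, c) * X (2, a)
    + X (0, c) * X (1, a) * X (2, b) - X (0, c) * X (1, b) * X (2, a) = _
  ring

lemma minor_all (i : Fin 14) : pluckerMinor 3 4 (subsets4 i) (subsets4_card i) =
    minors (fun a b => (X (a, b) : MvPolynomial (Fin 3 × Fin 4) ℂ)) i := by
  fin_cases i
  · exact minor1 0 0 rfl
  · exact minor1 1 1 rfl
  · exact minor1 2 2 rfl
  · exact minor1 3 3 rfl
  · exact minor2 4 0 1 (by decide) rfl
  · exact minor2 5 0 2 (by decide) rfl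
  · exact minor2 6 0 3 (by decide) rfl
  · exact minor2 7 1 2 (by decide) rfl
  · exact minor2 8 1 3 (by decide) rfl
  · exact minor2 9 2 3 (by decide) rfl
  · exact minor3 10 0 1 2 (by decide) (by decide) rfl
  · exact minor3 11 0 1 3 (by decide) (by decide) rfl
  · exact minor3 12 0 2 3 (by decide) (by decide) rfl
  · exact minor3 13 1 2 3 (by decide) (by decide) rfl

lemma phi4_eq : phi4 = aeval (minors (fun a b => (X (a, b) : MvPolynomial (Fin 3 × Fin 4) ℂ))) := by
  unfold phi4
  congr 1
  funext i
  exact minor_all i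

lemma mem_I4 (f : MvPolynomial (Fin 14) ℂ) : f ∈ I4 ↔
    aeval (minors (fun a b => (X (a, b) : MvPolynomial (Fin 3 × Fin 4) ℂ))) f = 0 := by
  rw [← phi4_eq]
  rfl

lemma I4_points (f : MvPolynomial (Fin 14) ℂ) (hf : f ∈ I4) (x : Fin 3 → Fin 4 → Polynomial ℂ) :
    aeval (minors x) f = 0 := by
  rw [mem_I4] at hf
  have h := congrArg (aeval (fun p : Fin 3 × Fin 4 => x p.1 p.2)) hf
  rw [map_zero, ← AlgHom.comp_apply, comp_aeval] at h
  rw [← h]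
  congr 2
  funext i
  fin_cases i <;> simp [minors]

/-- the weight -/
def nw : Fin 14 → ℕ := ![0, 0, 0, 0, 1, 0, 0, 0, 0, 2, 1, 1, 2, 2]

lemma wt_XX (w : Fin 14 → ℝ) (a b : Fin 14) (u : Fin 14 →₀ ℕ)
    (h : coeff u (X a * X b : MvPolynomial (Fin 14) ℂ) ≠ 0) : wt w u = w a + w b := by
  classical
  have h1 : (X a * X b : MvPolynomial (Fin 14) ℂ) =
      monomial (Finsupp.single a 1 + Finsupp.single b 1) 1 := by
    simp [X, monomial_mul]
  rw [h1, coeff_monomial] at h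
  have h2 : Finsupp.single a 1 + Finsupp.single b 1 = u := by
    by_contra hne
    exact h (if_neg hne)
  rw [← h2]
  simp [wt, mul_add, Finset.sum_add_distrib, Finsupp.single_apply]

lemma init3 (n : Fin 14 → ℕ) (a b c d e f : Fin 14) (h : n a + n b = n c + n d)
    (h2 : n a + n b < n e + n f) (s : ℂ) (hne : (X a * X b - X c * X d : MvPolynomial (Fin 14) ℂ) ≠ 0)
    (hI : (X a * X b - X c * X d + C s * (X e * X f) : MvPolynomial (Fin 14) ℂ) ∈ I4) :
    (X a * X b - X c * X d : MvPolynomial (Fin 14) ℂ) ∈ initialIdeal (fun i => (n i : ℝ)) I4 := by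
  set w : Fin 14 → ℝ := fun i => (n i : ℝ) with hw
  replace h : w a + w b = w c + w d := by simp only [hw]; exact_mod_cast h
  replace h2 : w a + w b < w e + w f := by simp only [hw]; exact_mod_cast h2
  have hi := init_of_split w (w a + w b) (X a * X b - X c * X d) (C s * (X e * X f)) hne
    (by
      intro u hu
      rw [coeff_sub] at hu
      by_cases h0 : coeff u (X a * X b : MvPolynomial (Fin 14) ℂ) = 0
      · rw [h0, zero_sub, neg_ne_zero] at hu
        rw [wt_XX w c d u hu, h]
      · exact wt_XX w a b u h0)
    (by
      intro u hu
      rw [coeff_C_mul] at hu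
      rw [wt_XX w e f u (right_ne_zero_of_mul hu)]
      exact h2)
  apply Ideal.subset_span
  refine ⟨_, hI, ?_, hi.symm⟩
  intro h0
  rw [h0] at hi
  apply hne
  rw [← hi]
  simp [initialForm]

lemma init4 (n : Fin 14 → ℕ) (a b c d e f e' f' : Fin 14) (h : n a + n b = n c + n d)
    (h2 : n a + n b < n e + n f) (h3 : n a + n b < n e' + n f') (s s' : ℂ)
    (hne : (X a * X b - X c * X d : MvPolynomial (Fin 14) ℂ) ≠ 0)
    (hI : (X a * X b - X c * X d + (C s * (X e * X f) + C s' * (X e' * X f'))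
      : MvPolynomial (Fin 14) ℂ) ∈ I4) :
    (X a * X b - X c * X d : MvPolynomial (Fin 14) ℂ) ∈ initialIdeal (fun i => (n i : ℝ)) I4 := by
  set w : Fin 14 → ℝ := fun i => (n i : ℝ) with hw
  replace h : w a + w b = w c + w d := by simp only [hw]; exact_mod_cast h
  replace h2 : w a + w b < w e + w f := by simp only [hw]; exact_mod_cast h2
  replace h3 : w a + w b < w e' + w f' := by simp only [hw]; exact_mod_cast h3
  have hi := init_of_split w (w a + w b) (X a * X b - X c * X d)
    (C s * (X e * X f) + C s' * (X e' * X f')) hne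
    (by
      intro u hu
      rw [coeff_sub] at hu
      by_cases h0 : coeff u (X a * X b : MvPolynomial (Fin 14) ℂ) = 0
      · rw [h0, zero_sub, neg_ne_zero] at hu
        rw [wt_XX w c d u hu, h]
      · exact wt_XX w a b u h0)
    (by
      intro u hu
      rw [coeff_add, coeff_C_mul, coeff_C_mul] at hu
      by_cases h0 : coeff u (X e * X f : MvPolynomial (Fin 14) ℂ) = 0
      · rw [h0, mul_zero, zero_add] at hu
        rw [wt_XX w e' f' u (right_ne_zero_of_mul hu)]
        exact h3
      · rw [wt_XX w e f u h0]
        exact h2)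
  apply Ideal.subset_span
  refine ⟨_, hI, ?_, hi.symm⟩
  intro h0
  rw [h0] at hi
  apply hne
  rw [← hi]
  simp [initialForm]

lemma binom_ne (a b c d : Fin 14) (hac : c ≠ a) (hbc : c ≠ b) :
    (X a * X b - X c * X d : MvPolynomial (Fin 14) ℂ) ≠ 0 := by
  intro h
  have := congrArg (eval (fun i => if i = c then (0 : ℂ) else 1)) h
  simp [hac.symm, hbc.symm] at this

lemma J_le_init : nonPrimeInitial ≤ initialIdeal (fun i => (nw i : ℝ)) I4 := by
  unfold nonPrimeInitial
  rw [Ideal.span_le]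
  intro g hg
  simp only [Set.mem_insert_iff, Set.mem_singleton_iff] at hg
  rcases hg with rfl | rfl | rfl | rfl | rfl | rfl | rfl | rfl | rfl | rfl
  · exact init4 _ 3 10 2 11 1 12 0 13 (by decide) (by decide) (by decide) 1 (-1)
      (binom_ne _ _ _ _ (by decide) (by decide)) (by rw [mem_I4]; simp [minors]; ring)
  · exact init3 _ 8 12 6 13 9 11 (by decide) (by decide) (-1)
      (binom_ne _ _ _ _ (by decide) (by decide)) (by rw [mem_I4]; simp [minors]; ring)
  · exact init3 _ 7 12 5 13 9 10 (by decide) (by decide) (-1)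
      (binom_ne _ _ _ _ (by decide) (by decide)) (by rw [mem_I4]; simp [minors]; ring)
  · exact init3 _ 1 6 0 8 3 4 (by decide) (by decide) (-1)
      (binom_ne _ _ _ _ (by decide) (by decide)) (by rw [mem_I4]; simp [minors]; ring)
  · exact init3 _ 1 5 0 7 2 4 (by decide) (by decide) (-1)
      (binom_ne _ _ _ _ (by decide) (by decide)) (by rw [mem_I4]; simp [minors]; ring)
  · exact init3 _ 8 10 7 11 4 13 (by decide) (by decide) 1
      (binom_ne _ _ _ _ (by decide) (by decide)) (by rw [mem_I4]; simp [minors]; ring)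
  · exact init3 _ 6 10 5 11 4 12 (by decide) (by decide) 1
      (binom_ne _ _ _ _ (by decide) (by decide)) (by rw [mem_I4]; simp [minors]; ring)
  · exact init3 _ 3 7 2 8 1 9 (by decide) (by decide) 1
      (binom_ne _ _ _ _ (by decide) (by decide)) (by rw [mem_I4]; simp [minors]; ring)
  · exact init3 _ 3 5 2 6 0 9 (by decide) (by decide) 1
      (binom_ne _ _ _ _ (by decide) (by decide)) (by rw [mem_I4]; simp [minors]; ring)
  · exact init3 _ 6 7 5 8 4 9 (by decide) (by decide) 1
      (binom_ne _ _ _ _ (by decide) (by decide)) (by rw [mem_I4]; simp [minors]; ring)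

/-- rows and columns for the two toric ideals -/
def rowP : Fin 14 → Fin 8 := ![2, 2, 0, 1, 4, 0, 1, 0, 1, 5, 0, 1, 3, 3]
/-- cols -/
def colP : Fin 14 → Fin 8 := ![2, 3, 0, 0, 4, 2, 2, 3, 3, 5, 1, 1, 2, 3]
/-- ranks -/
def rkP : Fin 8 → ℕ := ![1, 1, 0, 0, 1, 1, 1, 1]
/-- rows -/
def rowK : Fin 14 → Fin 8 := ![2, 3, 0, 1, 4, 0, 0, 0, 0, 5, 0, 1, 6, 7]
/-- cols -/
def colK : Fin 14 → Fin 8 := ![2, 3, 0, 0, 4, 0, 0, 0, 0, 5, 1, 1, 6, 7]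
/-- good variables -/
def GK (i : Fin 14) : Prop := i ≠ 5 ∧ i ≠ 6 ∧ i ≠ 7 ∧ i ≠ 8

instance : DecidablePred GK := fun i => by unfold GK; infer_instance

/-- quadruples of the binomials -/
def quads : List (Fin 14 × Fin 14 × Fin 14 × Fin 14) :=
  [(3, 10, 2, 11), (8, 12, 6, 13), (7, 12, 5, 13), (1, 6, 0, 8), (1, 5, 0, 7), (8, 10, 7, 11),
   (6, 10, 5, 11), (3, 7, 2, 8), (3, 5, 2, 6), (6, 7, 5, 8), (1, 12, 0, 13)]

/-- the ideal of the extra component -/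
noncomputable def idealK : Ideal (MvPolynomial (Fin 14) ℂ) :=
  Ideal.span {X 5, X 6, X 7, X 8, X 3 * X 10 - X 2 * X 11}

/-- the prime ideal -/
noncomputable def idealP : Ideal (MvPolynomial (Fin 14) ℂ) :=
  nonPrimeInitial ⊔ Ideal.span {X 1 * X 12 - X 0 * X 13}

/-- symmetric closure of membership in a list of quadruples -/
def symq (L : List (Fin 14 × Fin 14 × Fin 14 × Fin 14)) (i j k l : Fin 14) : Prop :=
  (i = k ∧ j = l) ∨ (i = l ∧ j = k) ∨ (i, j, k, l) ∈ L ∨ (j, i, k, l) ∈ L ∨ (i, j, l, k) ∈ L ∨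
    (j, i, l, k) ∈ L ∨ (k, l, i, j) ∈ L ∨ (k, l, j, i) ∈ L ∨ (l, k, i, j) ∈ L ∨ (l, k, j, i) ∈ L

set_option synthInstance.maxHeartbeats 400000 in
set_option synthInstance.maxSize 2000 in
instance (L : List (Fin 14 × Fin 14 × Fin 14 × Fin 14)) (i j k l : Fin 14) :
    Decidable (symq L i j k l) := by unfold symq; infer_instance

lemma symq_mem (L : List (Fin 14 × Fin 14 × Fin 14 × Fin 14)) (I : Ideal (MvPolynomial (Fin 14) ℂ))
    (hL : ∀ i j k l, (i, j, k, l) ∈ L → (X i * X j - X k * X l : MvPolynomial (Fin 14) ℂ) ∈ I)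
    (i j k l : Fin 14) (h : symq L i j k l) :
    (X i * X j - X k * X l : MvPolynomial (Fin 14) ℂ) ∈ I := by
  rcases h with ⟨rfl, rfl⟩ | ⟨rfl, rfl⟩ | h | h | h | h | h | h | h | h
  · simp
  · rw [mul_comm, sub_self]; exact I.zero_mem
  · exact hL _ _ _ _ h
  · convert hL _ _ _ _ h using 1; ring
  · convert hL _ _ _ _ h using 1; ring
  · convert hL _ _ _ _ h using 1; ring
  · convert I.neg_mem (hL _ _ _ _ h) using 1; ring
  · convert I.neg_mem (hL _ _ _ _ h) using 1; ring
  · convert I.neg_mem (hL _ _ _ _ h) using 1; ring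
  · convert I.neg_mem (hL _ _ _ _ h) using 1; ring

lemma J_mem (i j k l : Fin 14) (h : (i, j, k, l) ∈ quads) (h' : (i, j, k, l) ≠ (1, 12, 0, 13)) :
    (X i * X j - X k * X l : MvPolynomial (Fin 14) ℂ) ∈ nonPrimeInitial := by
  apply Ideal.subset_span
  simp only [quads, List.mem_cons, Prod.mk.injEq, List.not_mem_nil, or_false] at h
  rcases h with h | h | h | h | h | h | h | h | h | h | h <;>
    obtain ⟨rfl, rfl, rfl, rfl⟩ := h <;> first | (exact absurd rfl h') | simp

lemma J_le_P : nonPrimeInitial ≤ idealP := le_sup_left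

lemma q_mem_P : (X 1 * X 12 - X 0 * X 13 : MvPolynomial (Fin 14) ℂ) ∈ idealP :=
  le_sup_right (a := nonPrimeInitial) (Ideal.subset_span rfl)

lemma P_mem (i j k l : Fin 14) (h : (i, j, k, l) ∈ quads) :
    (X i * X j - X k * X l : MvPolynomial (Fin 14) ℂ) ∈ idealP := by
  by_cases h' : (i, j, k, l) = (1, 12, 0, 13)
  · simp only [Prod.mk.injEq] at h'
    obtain ⟨rfl, rfl, rfl, rfl⟩ := h'
    exact q_mem_P
  · exact J_le_P (J_mem i j k l h h')

lemma K_mem (i j k l : Fin 14) (h : (i, j, k, l) ∈ [((3 : Fin 14), (10 : Fin 14), (2 : Fin 14), (11 : Fin 14))]) :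
    (X i * X j - X k * X l : MvPolynomial (Fin 14) ℂ) ∈ idealK := by
  simp only [List.mem_singleton, Prod.mk.injEq] at h
  obtain ⟨rfl, rfl, rfl, rfl⟩ := h
  apply Ideal.subset_span
  simp

set_option maxRecDepth 100000 in
lemma swapP : ∀ i j k : Fin 14, rowP i = rowP k → colP j = colP k → rkP (rowP i) ≤ rkP (rowP j) →
    ∃ l, rowP l = rowP j ∧ colP l = colP i ∧ symq quads i j k l := by
  decide +kernel

set_option maxRecDepth 100000 in
lemma swapK : ∀ i j k : Fin 14, GK i → GK j → GK k → rowK i = rowK k → colK j = colK k →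
    ∃ l, GK l ∧ rowK l = rowK j ∧ colK l = colK i ∧ symq [(3, 10, 2, 11)] i j k l := by
  decide +kernel

lemma kerP (f : MvPolynomial (Fin 14) ℂ) (hf : theta rowP colP (fun _ => True) f = 0) : f ∈ idealP := by
  refine ker_theta_le rowP colP rkP _ idealP (fun i h => absurd trivial h) ?_ ?_ f hf
  · intro i j _ _; revert i j; decide +kernel
  · intro i j k _ _ _ h1 h2 h3
    obtain ⟨l, h4, h5, h6⟩ := swapP i j k h1 h2 h3
    exact ⟨l, trivial, h4, h5, symq_mem quads idealP P_mem i j k l h6⟩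

lemma kerK (f : MvPolynomial (Fin 14) ℂ) (hf : theta rowK colK GK f = 0) : f ∈ idealK := by
  refine ker_theta_le rowK colK (fun _ => 0) _ idealK ?_ ?_ ?_ f hf
  · intro i hi
    apply Ideal.subset_span
    have : i = 5 ∨ i = 6 ∨ i = 7 ∨ i = 8 := by revert i; decide +kernel
    rcases this with rfl | rfl | rfl | rfl <;> simp
  · decide +kernel
  · intro i j k g1 g2 g3 h1 h2 _
    obtain ⟨l, h0, h4, h5, h6⟩ := swapK i j k g1 g2 g3 h1 h2
    exact ⟨l, h0, h4, h5, symq_mem _ idealK K_mem i j k l h6⟩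

lemma P_le_ker : idealP ≤ RingHom.ker (theta rowP colP (fun _ => True)) := by
  unfold idealP nonPrimeInitial
  rw [sup_le_iff, Ideal.span_le, Ideal.span_le]
  constructor
  · intro g hg
    simp only [Set.mem_insert_iff, Set.mem_singleton_iff] at hg
    rcases hg with rfl | rfl | rfl | rfl | rfl | rfl | rfl | rfl | rfl | rfl <;>
    · rw [SetLike.mem_coe, RingHom.mem_ker]
      simp [theta, rowP, colP]
      ring
  · intro g hg
    rw [Set.mem_singleton_iff] at hg
    subst hg
    rw [SetLike.mem_coe, RingHom.mem_ker]
    simp [theta, rowP, colP]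
    ring

lemma P_prime : idealP.IsPrime := by
  have : idealP = RingHom.ker (theta rowP colP (fun _ => True)) := le_antisymm P_le_ker kerP
  rw [this]
  exact RingHom.ker_isPrime _

lemma J_le_kerK : nonPrimeInitial ≤ RingHom.ker (theta rowK colK GK) := by
  unfold nonPrimeInitial
  rw [Ideal.span_le]
  intro g hg
  simp only [Set.mem_insert_iff, Set.mem_singleton_iff] at hg
  rcases hg with rfl | rfl | rfl | rfl | rfl | rfl | rfl | rfl | rfl | rfl <;>
  · rw [SetLike.mem_coe, RingHom.mem_ker]
    simp [theta, rowK, colK, GK]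
    try ring

lemma q_kerK : theta rowK colK GK (X 1 * X 12 - X 0 * X 13) ≠ 0 := by
  intro h
  have := congrArg (eval (fun i => if i = Sum.inl 2 then (0 : ℂ) else 1)) h
  simp [theta, rowK, colK, GK] at this

lemma q_mul_K (h : MvPolynomial (Fin 14) ℂ) (hh : h ∈ idealK) :
    (X 1 * X 12 - X 0 * X 13) * h ∈ nonPrimeInitial := by
  have : idealK ≤ Submodule.comap (LinearMap.mulLeft (MvPolynomial (Fin 14) ℂ)
      (X 1 * X 12 - X 0 * X 13 : MvPolynomial (Fin 14) ℂ)) nonPrimeInitial := by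
    unfold idealK
    rw [Ideal.span_le]
    intro g hg
    simp only [Set.mem_insert_iff, Set.mem_singleton_iff] at hg
    rw [SetLike.mem_coe, Submodule.mem_comap, LinearMap.mulLeft_apply]
    rcases hg with rfl | rfl | rfl | rfl | rfl
    · convert nonPrimeInitial.add_mem
        (nonPrimeInitial.mul_mem_left (X 12) (J_mem 1 5 0 7 (by decide) (by decide)))
        (nonPrimeInitial.mul_mem_left (X 0) (J_mem 7 12 5 13 (by decide) (by decide))) using 1
      ring
    · convert nonPrimeInitial.add_mem
        (nonPrimeInitial.mul_mem_left (X 12) (J_mem 1 6 0 8 (by decide) (by decide)))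
        (nonPrimeInitial.mul_mem_left (X 0) (J_mem 8 12 6 13 (by decide) (by decide))) using 1
      ring
    · convert nonPrimeInitial.add_mem
        (nonPrimeInitial.mul_mem_left (X 13) (J_mem 1 5 0 7 (by decide) (by decide)))
        (nonPrimeInitial.mul_mem_left (X 1) (J_mem 7 12 5 13 (by decide) (by decide))) using 1
      ring
    · convert nonPrimeInitial.add_mem
        (nonPrimeInitial.mul_mem_left (X 13) (J_mem 1 6 0 8 (by decide) (by decide)))
        (nonPrimeInitial.mul_mem_left (X 1) (J_mem 8 12 6 13 (by decide) (by decide))) using 1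
      ring
    · exact nonPrimeInitial.mul_mem_left _ (J_mem 3 10 2 11 (by decide) (by decide))
  exact this hh

lemma mem_J (g : MvPolynomial (Fin 14) ℂ) (h1 : theta rowP colP (fun _ => True) g = 0)
    (h2 : theta rowK colK GK g = 0) : g ∈ nonPrimeInitial := by
  have hP := kerP g h1
  obtain ⟨j, hj, y, hy, rfl⟩ := Submodule.mem_sup.mp hP
  obtain ⟨h, rfl⟩ := Ideal.mem_span_singleton.mp hy
  refine nonPrimeInitial.add_mem hj (q_mul_K h (kerK h ?_))
  have hj' : theta rowK colK GK j = 0 := J_le_kerK hj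
  rw [map_add, hj', zero_add, map_mul] at h2
  exact (mul_eq_zero.mp h2).resolve_left q_kerK

lemma J_not_prime : ¬ nonPrimeInitial.IsPrime := by
  intro hp
  have hle : ∀ x : Fin 14 → ℂ, (∀ i j k l, (i, j, k, l) ∈ quads → (i, j, k, l) ≠ (1, 12, 0, 13) →
      x i * x j = x k * x l) → ∀ f ∈ nonPrimeInitial, eval x f = 0 := by
    intro x hx f hf
    have : nonPrimeInitial ≤ RingHom.ker (eval x) := by
      unfold nonPrimeInitial
      rw [Ideal.span_le]
      intro g hg
      simp only [Set.mem_insert_iff, Set.mem_singleton_iff] at hg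
      rcases hg with rfl | rfl | rfl | rfl | rfl | rfl | rfl | rfl | rfl | rfl <;>
      · rw [SetLike.mem_coe, RingHom.mem_ker, map_sub, map_mul, map_mul, eval_X, eval_X, eval_X, eval_X,
          sub_eq_zero]
        exact hx _ _ _ _ (by decide) (by decide)
    exact this hf
  have hm := q_mul_K (X 5) (Ideal.subset_span (by simp))
  rcases hp.mem_or_mem hm with h | h
  · have := hle (fun i => if i = 1 ∨ i = 12 then 1 else 0) (by
      intro i j k l h h'
      simp only [quads, List.mem_cons, Prod.mk.injEq, List.not_mem_nil, or_false] at h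
      rcases h with h | h | h | h | h | h | h | h | h | h | h <;>
        obtain ⟨rfl, rfl, rfl, rfl⟩ := h <;> first | (exact absurd rfl h') | simp) _ h
    simp at this
  · have := hle (fun i => if i = 5 then 1 else 0) (by
      intro i j k l h h'
      simp only [quads, List.mem_cons, Prod.mk.injEq, List.not_mem_nil, or_false] at h
      rcases h with h | h | h | h | h | h | h | h | h | h | h <;>
        obtain ⟨rfl, rfl, rfl, rfl⟩ := h <;> first | (exact absurd rfl h') | simp) _ h
    simp at this

lemma init_point (f : MvPolynomial (Fin 14) ℂ) (hf : f ∈ I4) (x : Fin 3 → Fin 4 → Polynomial ℂ)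
    (lam : Fin 14 → ℂ) (r : Fin 14 → Polynomial ℂ)
    (h : ∀ i, minors x i = Polynomial.X ^ nw i * (Polynomial.C (lam i) + Polynomial.X * r i)) :
    eval lam (initialForm (fun i => (nw i : ℝ)) f) = 0 := by
  apply init_eval nw lam r f
  rw [← I4_points f hf x]
  congr 2
  funext i
  exact (h i).symm

lemma pointP (f : MvPolynomial (Fin 14) ℂ) (hf : f ∈ I4) (u1 u2 v3 v4 a z y b d : ℂ) :
    eval ![u1, u2, a * v3, a * v4, u1 * z, u1 * v3, u1 * v4, u2 * v3, u2 * v4, y * v3,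
      b * u1 * v3, b * u1 * v4, d * u1 * v3, d * u2 * v3]
      (initialForm (fun i => (nw i : ℝ)) f) = 0 := by
  have key : ∀ u1 u2 v3 v4 a z y b d t : Polynomial ℂ,
      minors ![![u1, u2 + a * (t * z), a * v3, a * v4 - t ^ 2 * y], ![0, t * z, v3, v4],
        ![0, - (t * b), 0, t ^ 2 * d]] =
      ![u1, u2 + t * (a * z), a * v3, a * v4 + t * (- (t * y)), t * (u1 * z), u1 * v3, u1 * v4,
        u2 * v3, u2 * v4 + t * (t ^ 2 * y * z), t ^ 2 * (y * v3), t * (b * u1 * v3),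
        t * (b * u1 * v4 + t * (t * u1 * z * d)), t ^ 2 * (d * u1 * v3),
        t ^ 2 * (d * u2 * v3 + t * (- (y * v3 * b)))] := by
    intro u1 u2 v3 v4 a z y b d t
    funext i
    fin_cases i <;> simp [minors] <;> ring
  refine init_point f hf ![![.C u1, .C u2 + .C a * (.X * .C z), .C a * .C v3, .C a * .C v4 - .X ^ 2 * .C y],
      ![0, .X * .C z, .C v3, .C v4], ![0, - (.X * .C b), 0, .X ^ 2 * .C d]] _ ![0, .C (a * z), 0, - (.X * .C y), 0, 0, 0, 0, .X ^ 2 * .C y * .C z, 0, 0,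
    .X * .C u1 * .C z * .C d, 0, - (.C y * .C v3 * .C b)] (fun i => ?_)
  rw [key]
  fin_cases i <;> simp [nw]

lemma pointK (f : MvPolynomial (Fin 14) ℂ) (hf : f ∈ I4) (a b v3 v4 b1 b2 m c1 c2 : ℂ) :
    eval ![a, b, v3, v4, a * b2 - b * b1, 0, 0, 0, 0, v3 * m, v3 * (b1 * c2 - b2 * c1),
      v4 * (b1 * c2 - b2 * c1), v3 * m * c1, v3 * m * c2]
      (initialForm (fun i => (nw i : ℝ)) f) = 0 := by
  have key : ∀ a b v3 v4 b1 b2 m c1 c2 t : Polynomial ℂ,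
      minors ![![a, b, v3, v4], ![t * b1, t * b2, 0, t ^ 2 * m], ![c1, c2, 0, 0]] =
      ![a, b, v3, v4, t * (a * b2 - b * b1), t * (- (v3 * b1)), t * (a * t * m - v4 * b1),
        t * (- (v3 * b2)), t * (b * t * m - v4 * b2), t ^ 2 * (v3 * m),
        t * (v3 * (b1 * c2 - b2 * c1)), t * (v4 * (b1 * c2 - b2 * c1) + t * (m * (b * c1 - a * c2))),
        t ^ 2 * (v3 * m * c1), t ^ 2 * (v3 * m * c2)] := by
    intro a b v3 v4 b1 b2 m c1 c2 t
    funext i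
    fin_cases i <;> simp [minors] <;> ring
  refine init_point f hf ![![.C a, .C b, .C v3, .C v4], ![.X * .C b1, .X * .C b2, 0, .X ^ 2 * .C m],
      ![.C c1, .C c2, 0, 0]] _ ![0, 0, 0, 0, 0, - (.C v3 * .C b1), .C a * .X * .C m - .C v4 * .C b1,
    - (.C v3 * .C b2), .C b * .X * .C m - .C v4 * .C b2, 0, 0,
    .C m * (.C b * .C c1 - .C a * .C c2), 0, 0] (fun i => ?_)
  rw [key]
  fin_cases i <;> simp [nw]

lemma init_le_J : initialIdeal (fun i => (nw i : ℝ)) I4 ≤ nonPrimeInitial := by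
  unfold initialIdeal
  rw [Ideal.span_le]
  rintro g ⟨f, hf, -, rfl⟩
  apply mem_J
  · apply theta_zero_of_points rowP colP (fun _ => True) 1 _ (by simp)
    intro r c hr hc _
    have h := pointP f hf (r 2 * c 2) (r 2 * c 3) (r 0 / r 2) (r 1 / r 2) (c 0 * r 2)
      (r 4 * c 4 / (r 2 * c 2)) (r 5 * c 5 * r 2 / r 0) (c 1 / c 2) (r 3 / r 0)
    refine Eq.trans ?_ h
    have h0 := hr 0
    have h2 := hr 2
    have h3 := hc 2
    congr 2
    funext i
    fin_cases i <;> simp [rowP, colP] <;> field_simp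
  · apply theta_zero_of_points rowK colK GK _ _ q_kerK
    intro r c hr hc hq
    have hq' : (r 3 * c 3) * (r 6 * c 6) - (r 2 * c 2) * (r 7 * c 7) ≠ 0 := by
      simpa [rowK, colK, GK] using hq
    have hr0 := hr 0
    have hc0 := hc 0
    have hr5 := hr 5
    have hc5 := hc 5
    obtain ⟨m, hm⟩ : ∃ m, r 0 * c 0 * m = r 5 * c 5 := ⟨r 5 * c 5 / (r 0 * c 0), by field_simp⟩
    obtain ⟨c1, hc1⟩ : ∃ c1, r 5 * c 5 * c1 = r 6 * c 6 := ⟨r 6 * c 6 / (r 5 * c 5), by field_simp⟩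
    obtain ⟨c2, hc2⟩ : ∃ c2, r 5 * c 5 * c2 = r 7 * c 7 := ⟨r 7 * c 7 / (r 5 * c 5), by field_simp⟩
    obtain ⟨Q, hQ⟩ : ∃ Q, c 0 * Q = c 1 := ⟨c 1 / c 0, by field_simp⟩
    have hD : r 2 * c 2 * c2 - r 3 * c 3 * c1 ≠ 0 := by
      intro h0
      apply hq'
      rw [← hc1, ← hc2]
      linear_combination (- (r 5 * c 5)) * h0
    obtain ⟨D, hD'⟩ : ∃ D, (r 2 * c 2 * c2 - r 3 * c 3 * c1) * D = 1 :=
      ⟨(r 2 * c 2 * c2 - r 3 * c 3 * c1)⁻¹, mul_inv_cancel₀ hD⟩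
    have h := pointK f hf (r 2 * c 2) (r 3 * c 3) (r 0 * c 0) (r 1 * c 0)
      ((r 2 * c 2 * Q + c1 * (r 4 * c 4)) * D) ((c2 * (r 4 * c 4) + r 3 * c 3 * Q) * D) m c1 c2
    refine Eq.trans ?_ h
    congr 2
    funext i
    fin_cases i <;> simp [rowK, colK, GK]
    · linear_combination (- (r 4 * c 4)) * hD'
    · exact hm.symm
    · linear_combination (- (r 0 * c 0 * Q)) * hD' - r 0 * hQ
    · linear_combination (- (r 1 * c 0 * Q)) * hD' - r 1 * hQ
    · rw [hm, hc1]
    · rw [hm, hc2]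

/-- The ideal generated by the ten listed binomials is the initial ideal of `I₄` for some
weight vector, is not prime, and becomes prime after adding the binomial
`p₂p₁₃₄ − p₁p₂₃₄`. -/
theorem nonprime_cone_flag4 :
    (∃ w : Fin 14 → ℝ, initialIdeal w I4 = nonPrimeInitial) ∧
    ¬ nonPrimeInitial.IsPrime ∧
    (nonPrimeInitial ⊔ Ideal.span {X 1 * X 12 - X 0 * X 13}).IsPrime := by
  exact ⟨⟨fun i => (nw i : ℝ), le_antisymm init_le_J J_le_init⟩, J_not_prime, P_prime⟩
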